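/- Let L, m, ℓ, n be natural numbers with ℓ < m, and let w be a word of length L over the alphabet consisting of the unbarred letters 1, 2, …, m, the barred letters 1̄, 2̄, …, m̄, and one extra letter φ. For 1 ≤ j ≤ m let c_j denote the number of positions of w carrying the letter j and c̄_j the number of positions carrying the letter j̄. Suppose λ_1, …, λ_ℓ are positive natural numbers such that c_j − c̄_j = λ_j for all 1 ≤ j ≤ ℓ, and that c_j = c̄_j and c_j > 0 for all ℓ < j ≤ m. Set M = max_{ℓ < j ≤ m} c̄_j and |λ| = λ_1 + λ_2 + ⋯ + λ_ℓ. If n > (2ℓ + 1) + (L − |λ|), then n ≥ 2·(M + m). -/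

import Mathlib

/-!
Sort the positions of the word by the index of their letter. The indices `j ≤ ℓ` account for at
least `|λ|` positions. Each `j > ℓ` accounts for `2 c̄_j` of them with `c̄_j ≥ 1`; taking one
such `j` with `c̄_j = M` and bounding the other `m - ℓ - 1` counts below by `1` gives
`|λ| + 2 (M + m - ℓ - 1) ≤ L`.
-/

open Finset

section LetterCount

variable {ι α κ : Type*} [Fintype ι] [DecidableEq α]

/-- The number of positions at which the word `w` carries the letter `a`. Words are functions on an
arbitrary finite type of positions. -/
def letterCount (w : ι → α) (a : α) : ℕ := #{i | w i = a}

theorem sum_letterCount_le_card [Fintype κ] (w : ι → α) (f : κ ↪ α) :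
    ∑ k, letterCount w (f k) ≤ Fintype.card ι :=
  calc ∑ k, letterCount w (f k) = ∑ a ∈ univ.map f, #{i | w i = a} := (sum_map _ _ _).symm
    _ = #{i | w i ∈ univ.map f} := sum_card_fiberwise_eq_card_filter _ _ _
    _ ≤ Fintype.card ι := card_le_univ _

end LetterCount

theorem sup_add_card_le_sum_add_one {κ : Type*} {s : Finset κ} {f : κ → ℕ}
    (hf : ∀ k ∈ s, 0 < f k) : s.sup f + #s ≤ ∑ k ∈ s, f k + 1 := by
  classical
  obtain rfl | hs := s.eq_empty_or_nonempty
  · simp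
  obtain ⟨a, ha, hsup⟩ := exists_mem_eq_sup s hs f
  have card_le : #(s.erase a) ≤ ∑ k ∈ s.erase a, f k := by
    simpa using card_nsmul_le_sum (s.erase a) f 1 fun k hk => hf k (mem_of_mem_erase hk)
  have card_erase : #(s.erase a) + 1 = #s := card_erase_add_one ha
  have sum_erase : f a + ∑ k ∈ s.erase a, f k = ∑ k ∈ s, f k := add_sum_erase s f ha
  lia

section Profile

variable {J κ : Type*} [Fintype J] [DecidableEq J] [Fintype κ]
  {c cbar : J → ℕ} {e : κ ↪ J} {T : Finset J} {lam : κ → ℕ}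

theorem sum_add_two_mul_sup_add_card_le (hT : (univ.map e)ᶜ = T)
    (hlam : ∀ k, lam k ≤ c (e k) + cbar (e k)) (htail : ∀ j ∈ T, 0 < cbar j ∧ cbar j ≤ c j) :
    ∑ k, lam k + 2 * (T.sup cbar + #T) ≤ ∑ j, (c j + cbar j) + 2 := by
  have head : ∑ k, lam k ≤ ∑ j ∈ univ.map e, (c j + cbar j) := by
    rw [sum_map]
    exact sum_le_sum fun k _ => hlam k
  have tail : 2 * ∑ j ∈ T, cbar j ≤ ∑ j ∈ T, (c j + cbar j) := by
    rw [mul_sum]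
    exact sum_le_sum fun j hj => by linarith [(htail j hj).2]
  have sup_le : T.sup cbar + #T ≤ ∑ j ∈ T, cbar j + 1 :=
    sup_add_card_le_sum_add_one fun j hj => (htail j hj).1
  have split : ∑ j ∈ univ.map e, (c j + cbar j) + ∑ j ∈ T, (c j + cbar j) =
      ∑ j, (c j + cbar j) := hT ▸ sum_add_sum_compl _ _
  lia

/-- `letter (j, false)` and `letter (j, true)` play the roles of `j` and `j̄`, and `e` embeds the
indices of the parts of `λ`, so that `T` takes the place of `{j : ℓ < j ≤ m}`. -/
theorem stmt2_general {ι α : Type*} [Fintype ι] [DecidableEq α] {w : ι → α} {n : ℕ}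
    (letter : J × Bool ↪ α) (hc : ∀ j, c j = letterCount w (letter (j, false)))
    (hcbar : ∀ j, cbar j = letterCount w (letter (j, true))) (hT : (univ.map e)ᶜ = T)
    (hlam : ∀ k, lam k ≤ c (e k) + cbar (e k)) (htail : ∀ j ∈ T, 0 < cbar j ∧ cbar j ≤ c j)
    (hn : 2 * Fintype.card κ + 1 + (Fintype.card ι - ∑ k, lam k) < n) :
    2 * (T.sup cbar + Fintype.card J) ≤ n := by
  have sum_counts_le : ∑ j, (c j + cbar j) ≤ Fintype.card ι := by
    simpa only [Fintype.sum_prod_type, Fintype.sum_bool, ← hc, ← hcbar, add_comm] using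
      sum_letterCount_le_card w letter
  have card_split : Fintype.card κ + #T = Fintype.card J := by
    simpa only [card_map, card_univ, hT] using card_add_card_compl (univ.map e)
  have profile_le := sum_add_two_mul_sup_add_card_le hT hlam htail
  lia

end Profile

theorem compl_map_castLEEmb_univ {ℓ m : ℕ} (h : ℓ ≤ m) :
    (univ.map (Fin.castLEEmb h))ᶜ = ({j | ℓ ≤ (j : ℕ)} : Finset (Fin m)) := by
  ext j
  have mem_range : (∃ i, Fin.castLE h i = j) ↔ (j : ℕ) < ℓ :=
    Set.ext_iff.mp (Fin.range_castLE h) j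
  simp [mem_range]

/-- the combinatorial core of the rank estimate: under the count-profile
hypotheses, if `n > (2ℓ + 1) + (L - |λ|)` then `n ≥ 2·(M + m)` where
`M = max_{ℓ < j ≤ m} c̄_j`. -/
theorem stmt2 (L m ℓ n : ℕ) (hℓm : ℓ < m)
    (w : Fin L → (Fin m × Bool) ⊕ Unit)
    (c cbar : Fin m → ℕ)
    (hc : ∀ j : Fin m, c j = (Finset.univ.filter (fun i => w i = Sum.inl (j, false))).card)
    (hcbar : ∀ j : Fin m, cbar j = (Finset.univ.filter (fun i => w i = Sum.inl (j, true))).card)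
    (lam : Fin ℓ → ℕ) (hpos : ∀ j, 0 < lam j)
    (hlam : ∀ j : Fin ℓ, c (Fin.castLE hℓm.le j) = cbar (Fin.castLE hℓm.le j) + lam j)
    (heq : ∀ j : Fin m, ℓ ≤ (j : ℕ) → c j = cbar j ∧ 0 < c j)
    (M : ℕ)
    (hM : M = (Finset.univ.filter (fun j : Fin m => ℓ ≤ (j : ℕ))).sup cbar)
    (hn : n > (2 * ℓ + 1) + (L - ∑ j, lam j)) :
    n ≥ 2 * (M + m) := by
  have head : ∀ k, lam k ≤ c (Fin.castLE hℓm.le k) + cbar (Fin.castLE hℓm.le k) :=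
    fun k => by linarith [hlam k]
  have tail : ∀ j ∈ ({j | ℓ ≤ (j : ℕ)} : Finset (Fin m)), 0 < cbar j ∧ cbar j ≤ c j :=
    fun j hj => by have := heq j ((mem_filter_univ j).mp hj); lia
  simpa [hM] using stmt2_general .inl hc hcbar (compl_map_castLEEmb_univ hℓm.le) head tail
    (by simpa using hn)
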